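/- Let b : ℝ × ℝ^d → ℝ^d be smooth, Lipschitz in space uniformly in time, with flow X(t,x), and let J(t,x) := det(∇ₓX(t,x)). If there is C > 0 with 1/C ≤ J(t,x) ≤ C for all (t,x), then the function ρ(t,x) defined by ρ(t, X(t,x)) := 1/J(t,x) satisfies 1/C ≤ ρ ≤ C and solves the continuity equation ∂ₜρ + div(bρ) = 0; in particular b is nearly incompressible. -/

import Mathlib

/-- Two-sided Gronwall estimate. -/
theorem gron {E : Type*} [NormedAddCommGroup E] [NormedSpace ℝ E] (f f' : ℝ → E) (L : ℝ)
    (hf : ∀ t, HasDerivAt f (f' t) t) (hL : ∀ t, ‖f' t‖ ≤ L * ‖f t‖) (s t : ℝ) :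
    ‖f t‖ ≤ ‖f s‖ * Real.exp (L * |t - s|) := by
  have key : ∀ (g g' : ℝ → E), (∀ t, HasDerivAt g (g' t) t) → (∀ t, ‖g' t‖ ≤ L * ‖g t‖) →
      ∀ s t, s ≤ t → ‖g t‖ ≤ ‖g s‖ * Real.exp (L * (t - s)) := by
    intro g g' hg hgL s t hst
    have := norm_le_gronwallBound_of_norm_deriv_right_le (f := g) (f' := g') (δ := ‖g s‖) (K := L)
      (ε := 0) (a := s) (b := t) (fun x _ => (hg x).continuousAt.continuousWithinAt)
      (fun x _ => (hg x).hasDerivWithinAt) le_rfl (fun x _ => by simpa using hgL x) t ⟨hst, le_rfl⟩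
    rwa [gronwallBound_ε0] at this
  rcases le_total s t with h | h
  · rw [abs_of_nonneg (by linarith)]
    exact key f f' hf hL s t h
  · rw [abs_of_nonpos (by linarith)]
    have := key (fun t => f (-t)) (fun t => - f' (-t)) (fun t => by
      have := (hf (-t)).scomp t (hasDerivAt_neg t)
      simpa [Function.comp_def] using this) (fun t => by simpa using hL (-t)) (-s) (-t) (by linarith)
    simp only [neg_neg] at this
    convert this using 3
    ring

/-- Lipschitz estimate for the flow. -/
theorem flow_lip {E : Type*} [NormedAddCommGroup E] [NormedSpace ℝ E] (b X : ℝ × E → E) (L : NNReal)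
    (hblip : ∀ t : ℝ, LipschitzWith L (fun x => b (t, x)))
    (hflow : ∀ (t : ℝ) (x : E), HasDerivAt (fun s => X (s, x)) (b (t, X (t, x))) t)
    (s t : ℝ) (x y : E) :
    ‖X (t, x) - X (t, y)‖ ≤ ‖X (s, x) - X (s, y)‖ * Real.exp (L * |t - s|) :=
  gron (fun t => X (t, x) - X (t, y)) (fun t => b (t, X (t, x)) - b (t, X (t, y))) L
    (fun t => (hflow t x).sub (hflow t y))
    (fun t => by simpa [dist_eq_norm] using (hblip t).dist_le_mul (X (t, x)) (X (t, y))) s t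

theorem flow_surj_step {E : Type*} [NormedAddCommGroup E] [NormedSpace ℝ E] [CompleteSpace E]
    (b X : ℝ × E → E) (L : NNReal)
    (hblip : ∀ t : ℝ, LipschitzWith L (fun x => b (t, x)))
    (hflow : ∀ (t : ℝ) (x : E), HasDerivAt (fun s => X (s, x)) (b (t, X (t, x))) t)
    (s t : ℝ) (hst : L * |t - s| ≤ 1 / 4) (hs : Function.Surjective (fun x => X (s, x))) :
    Function.Surjective (fun x => X (t, x)) := by
  intro y
  let g := Function.surjInv hs
  have hg : ∀ z, X (s, g z) = z := Function.surjInv_eq hs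
  let G : E → E := fun z => y - (X (t, g z) - z)
  have hG : ContractingWith (3 / 4) G := by
    refine ⟨by rw [← NNReal.coe_lt_coe]; norm_num, LipschitzWith.of_dist_le_mul fun z z' => ?_⟩
    have hmv := (convex_uIcc s t).norm_image_sub_le_of_norm_hasDerivWithin_le
      (f := fun r => X (r, g z) - X (r, g z')) (f' := fun r => b (r, X (r, g z)) - b (r, X (r, g z')))
      (C := L * (‖z - z'‖ * Real.exp 1)) (x := s) (y := t)
      (fun r _ => ((hflow r _).sub (hflow r _)).hasDerivWithinAt)
      (fun r hr => by
        have h1 := (hblip r).dist_le_mul (X (r, g z)) (X (r, g z'))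
        have h2 := flow_lip b X L hblip hflow s r (g z) (g z')
        rw [dist_eq_norm, dist_eq_norm] at h1
        refine h1.trans ?_
        rw [hg, hg] at h2
        have h3 : |r - s| ≤ |t - s| := Set.abs_sub_left_of_mem_uIcc hr
        have h4 : (L : ℝ) * |r - s| ≤ 1 := by
          have := mul_le_mul_of_nonneg_left h3 L.2
          change (L : ℝ) * _ ≤ L * _ at this
          linarith
        gcongr
        refine h2.trans ?_
        gcongr) Set.left_mem_uIcc Set.right_mem_uIcc
    simp only [hg] at hmv
    have e : G z - G z' = - (X (t, g z) - X (t, g z') - (z - z')) := by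
      simp only [G]; abel
    rw [dist_eq_norm, dist_eq_norm, e, norm_neg]
    refine hmv.trans ?_
    rw [Real.norm_eq_abs]
    have h5 := Real.exp_one_lt_three
    have h6 := norm_nonneg (z - z')
    have h7 : (L * |t - s|) * Real.exp 1 ≤ 1 / 4 * 3 := by gcongr
    have : ((3 / 4 : NNReal) : ℝ) = 3 / 4 := by norm_num
    rw [this]
    nlinarith
  have := hG.fixedPoint_isFixedPt
  refine ⟨g (hG.fixedPoint), ?_⟩
  have h : y - (X (t, g (hG.fixedPoint)) - hG.fixedPoint) = hG.fixedPoint := this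
  have h2 : y - X (t, g (hG.fixedPoint)) = 0 := by
    have := sub_eq_zero.2 h
    rw [← this]; abel
  exact (sub_eq_zero.1 h2).symm

theorem flow_surj {E : Type*} [NormedAddCommGroup E] [NormedSpace ℝ E] [CompleteSpace E]
    (b X : ℝ × E → E) (L : NNReal)
    (hblip : ∀ t : ℝ, LipschitzWith L (fun x => b (t, x)))
    (hflow : ∀ (t : ℝ) (x : E), HasDerivAt (fun s => X (s, x)) (b (t, X (t, x))) t)
    (hflow0 : ∀ x, X (0, x) = x) (t : ℝ) :
    Function.Surjective (fun x => X (t, x)) := by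
  obtain ⟨n, hn⟩ := exists_nat_ge (4 * (L * |t|))
  have hn1 : (0 : ℝ) < n + 1 := by positivity
  have h : ∀ k : ℕ, Function.Surjective (fun x => X (k * (t / (n + 1)), x)) := by
    intro k
    induction k with
    | zero => intro y; exact ⟨y, by simp [hflow0]⟩
    | succ k ih =>
      refine flow_surj_step b X L hblip hflow _ _ ?_ ih
      have : ((k + 1 : ℕ) : ℝ) * (t / (n + 1)) - k * (t / (n + 1)) = t / (n + 1) := by
        push_cast; ring
      rw [this, abs_div, abs_of_pos hn1, ← mul_div_assoc, div_le_iff₀ hn1]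
      linarith
  have := h (n + 1)
  have e : ((n + 1 : ℕ) : ℝ) * (t / (n + 1)) = t := by push_cast; field_simp
  rwa [e] at this

/-- The linearized equation for the flow. -/
theorem flow_deriv {E : Type*} [NormedAddCommGroup E] [NormedSpace ℝ E] [CompleteSpace E]
    (b X : ℝ × E → E) (L : NNReal) (hb : ContDiff ℝ 1 b)
    (hblip : ∀ t : ℝ, LipschitzWith L (fun x => b (t, x)))
    (hflow : ∀ (t : ℝ) (x : E), HasDerivAt (fun s => X (s, x)) (b (t, X (t, x))) t)
    (hflow0 : ∀ x, X (0, x) = x)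
    (hd : ∀ t x, DifferentiableAt ℝ (fun y => X (t, y)) x) (t : ℝ) (x v : E) :
    HasDerivAt (fun t => fderiv ℝ (fun y => X (t, y)) x v)
      (fderiv ℝ b (t, X (t, x)) (0, fderiv ℝ (fun y => X (t, y)) x v)) t := by
  set w : ℝ → E := fun t => fderiv ℝ (fun y => X (t, y)) x v with hw
  have hXc : ∀ y, Continuous fun t => X (t, y) := fun y =>
    continuous_iff_continuousAt.2 fun t => (hflow t y).continuousAt
  have hbX : ∀ y, Continuous fun t => b (t, X (t, y)) := fun y =>
    hb.continuous.comp (continuous_id.prodMk (hXc y))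
  have hline : ∀ t, HasDerivAt (fun h : ℝ => X (t, x + h • v)) (w t) 0 := by
    intro t
    have h1 : HasDerivAt (fun h : ℝ => x + h • v) v 0 := by
      simpa using ((hasDerivAt_id (0 : ℝ)).smul_const v).const_add x
    have h2 : HasFDerivAt (fun y => X (t, y)) (fderiv ℝ (fun y => X (t, y)) x) (x + (0 : ℝ) • v) := by
      simpa using (hd t x).hasFDerivAt
    exact h2.comp_hasDerivAt (0 : ℝ) h1
  have hlineb : ∀ t, HasDerivAt (fun h : ℝ => b (t, X (t, x + h • v)))
      (fderiv ℝ b (t, X (t, x)) (0, w t)) 0 := by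
    intro t
    have h2 : HasFDerivAt b (fderiv ℝ b (t, X (t, x))) (t, X (t, x + (0 : ℝ) • v)) := by
      simpa using (hb.differentiable one_ne_zero (t, X (t, x))).hasFDerivAt
    exact h2.comp_hasDerivAt (0 : ℝ) ((hasDerivAt_const (0 : ℝ) t).prodMk (hline t))
  have hmeas : ∀ μ : MeasureTheory.Measure ℝ, MeasureTheory.AEStronglyMeasurable
      (fun t => fderiv ℝ b (t, X (t, x)) (0, w t)) μ := by
    intro μ
    refine aestronglyMeasurable_of_tendsto_ae (Filter.atTop : Filter ℕ)
      (f := fun n t => ((1 : ℝ) / ((n : ℝ) + 1))⁻¹ •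
        (b (t, X (t, x + ((1 : ℝ) / ((n : ℝ) + 1)) • v)) - b (t, X (t, x))))
      (fun n => (((hbX _).sub (hbX _)).const_smul _).aestronglyMeasurable) ?_
    refine Filter.Eventually.of_forall fun t => ?_
    have h1 := (hlineb t).tendsto_slope_zero_right
    have h2 : Filter.Tendsto (fun n : ℕ => (1 : ℝ) / ((n : ℝ) + 1)) Filter.atTop
        (nhdsWithin 0 (Set.Ioi 0)) :=
      tendsto_nhdsWithin_iff.2 ⟨tendsto_one_div_add_atTop_nhds_zero_nat,
        Filter.Eventually.of_forall fun n => by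
          simp only [Set.mem_Ioi]; positivity⟩
    simpa [Function.comp_def] using h1.comp h2
  have hXint : ∀ t y, X (t, y) = y + ∫ r in (0 : ℝ)..t, b (r, X (r, y)) := by
    intro t y
    rw [intervalIntegral.integral_eq_sub_of_hasDerivAt (fun r _ => hflow r y)
      ((hbX y).intervalIntegrable _ _), hflow0]
    abel
  have key : ∀ t, IntervalIntegrable (fun t => fderiv ℝ b (t, X (t, x)) (0, w t))
      MeasureTheory.volume 0 t ∧
      w t = v + ∫ r in (0 : ℝ)..t, fderiv ℝ b (r, X (r, x)) (0, w r) := by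
    intro t
    have := intervalIntegral.hasDerivAt_integral_of_dominated_loc_of_lip (μ := MeasureTheory.volume)
      (F := fun h r => b (r, X (r, x + h • v)))
      (F' := fun r => fderiv ℝ b (r, X (r, x)) (0, w r)) (x₀ := (0 : ℝ)) (s := Set.univ)
      (a := 0) (b := t) (bound := fun r => L * (Real.exp (L * |r|) * ‖v‖))
      Filter.univ_mem (Filter.Eventually.of_forall fun h => (hbX _).aestronglyMeasurable)
      ((hbX _).intervalIntegrable _ _) (hmeas _) (Filter.Eventually.of_forall fun r _ => by
        refine LipschitzWith.lipschitzOnWith (LipschitzWith.of_dist_le_mul fun h h' => ?_)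
        have h1 := (hblip r).dist_le_mul (X (r, x + h • v)) (X (r, x + h' • v))
        have h2 := flow_lip b X L hblip hflow 0 r (x + h • v) (x + h' • v)
        have e : x + h • v - (x + h' • v) = (h - h') • v := by rw [sub_smul]; abel
        rw [hflow0, hflow0, sub_zero, e, norm_smul] at h2
        refine h1.trans ?_
        rw [Real.coe_nnabs, abs_of_nonneg (by positivity), dist_eq_norm, dist_eq_norm, mul_assoc]
        gcongr
        refine h2.trans (le_of_eq (by ring)))
      ((by fun_prop : Continuous fun r : ℝ => (L : ℝ) * (Real.exp (L * |r|) * ‖v‖)).intervalIntegrable _ _)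
      (Filter.Eventually.of_forall fun r _ => hlineb r)
    refine ⟨this.1, (hline t).unique ?_⟩
    have h1 : HasDerivAt (fun h : ℝ => x + h • v) v 0 := by
      simpa using ((hasDerivAt_id (0 : ℝ)).smul_const v).const_add x
    exact (h1.add this.2).congr_of_eventuallyEq
      (Filter.Eventually.of_forall fun h => hXint t (x + h • v))
  have hwc : Continuous w := by
    have : Continuous fun t => v + ∫ r in (0 : ℝ)..t, fderiv ℝ b (r, X (r, x)) (0, w r) :=
      continuous_const.add (intervalIntegral.continuous_primitive
        (fun a c => (key a).1.symm.trans (key c).1) 0)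
    exact this.congr fun t => ((key t).2).symm
  have hAc : Continuous fun r => fderiv ℝ b (r, X (r, x)) (0, w r) :=
    ((hb.continuous_fderiv one_ne_zero).comp (continuous_id.prodMk (hXc x))).clm_apply
      (continuous_const.prodMk hwc)
  have := (hAc.integral_hasStrictDerivAt 0 t).hasDerivAt.const_add v
  exact this.congr_of_eventuallyEq (Filter.Eventually.of_forall fun t => (key t).2)

/-- Jacobi's formula along a linear ODE. -/
theorem det_deriv {d : ℕ} (W : ℝ → Fin d → Fin d → ℝ) (A : Fin d → Fin d → ℝ) (t : ℝ)
    (h : ∀ i j, HasDerivAt (fun s => W s i j) (∑ k, A i k * W t k j) t) :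
    HasDerivAt (fun s => Matrix.det (Matrix.of (W s))) ((∑ i, A i i) * Matrix.det (Matrix.of (W t))) t := by
  have hcont : Continuous (fun M : Fin d → Fin d → ℝ => Matrix.det (Matrix.of M)) :=
    Continuous.matrix_det continuous_id
  let D : ContinuousMultilinearMap ℝ (fun _ : Fin d => Fin d → ℝ) ℝ :=
    { (Matrix.detRowAlternating (R := ℝ) (n := Fin d)).toMultilinearMap with cont := hcont }
  have hW : HasDerivAt W (fun i j => ∑ k, A i k * W t k j) t :=
    hasDerivAt_pi.2 fun i => hasDerivAt_pi.2 fun j => h i j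
  have h1 := (D.hasFDerivAt (W t)).comp_hasDerivAt t hW
  have e : D.linearDeriv (W t) (fun i j => ∑ k, A i k * W t k j)
      = (∑ i, A i i) * Matrix.det (Matrix.of (W t)) := by
    rw [ContinuousMultilinearMap.linearDeriv_apply, Finset.sum_mul]
    refine Finset.sum_congr rfl fun i _ => ?_
    have := Matrix.det_updateRow_sum (Matrix.of (W t)) i (A i)
    rw [smul_eq_mul] at this
    rw [← this]
    change Matrix.det (Matrix.updateRow _ _ _) = _
    congr 2
    ext j
    simp [Finset.sum_apply]
  rw [e] at h1
  exact h1

/-- If the Jacobian of the flow of b is bounded away from 0 and ∞, then ρ defined by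
ρ(t, X(t,x)) = 1/det(∇ₓX(t,x)) satisfies 1/C ≤ ρ ≤ C and solves the continuity
equation: b is nearly incompressible. -/
theorem stmt_15 (d : ℕ) (b : ℝ × (Fin d → ℝ) → Fin d → ℝ)
    (X : ℝ × (Fin d → ℝ) → Fin d → ℝ) (ρ : ℝ × (Fin d → ℝ) → ℝ) (C : ℝ)
    (hC : 0 < C)
    (hb : ContDiff ℝ (⊤ : ℕ∞) b)
    (hblip : ∃ L : NNReal, ∀ t : ℝ, LipschitzWith L (fun x => b (t, x)))
    (hflow : ∀ (t : ℝ) (x : Fin d → ℝ),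
      HasDerivAt (fun s => X (s, x)) (b (t, X (t, x))) t)
    (hflow0 : ∀ x : Fin d → ℝ, X (0, x) = x)
    (hρ : ContDiff ℝ (⊤ : ℕ∞) ρ)
    (hJbound : ∀ (t : ℝ) (x : Fin d → ℝ),
      1 / C ≤ Matrix.det (Matrix.of fun i j =>
          fderiv ℝ (fun y => X (t, y) i) x (Pi.single j 1))
        ∧ Matrix.det (Matrix.of fun i j =>
            fderiv ℝ (fun y => X (t, y) i) x (Pi.single j 1)) ≤ C)
    (hρdef : ∀ (t : ℝ) (x : Fin d → ℝ),
      ρ (t, X (t, x)) = (Matrix.det (Matrix.of fun i j =>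
        fderiv ℝ (fun y => X (t, y) i) x (Pi.single j 1)))⁻¹) :
    (∀ p : ℝ × (Fin d → ℝ), 1 / C ≤ ρ p ∧ ρ p ≤ C)
    ∧ (∀ p : ℝ × (Fin d → ℝ),
        fderiv ℝ ρ p (1, 0)
          + ∑ i, fderiv ℝ (fun q => b q i * ρ q) p (0, Pi.single i 1) = 0) := by
  obtain ⟨L, hL⟩ := hblip
  have hpos : ∀ t x, 0 < Matrix.det (Matrix.of fun i j =>
          fderiv ℝ (fun y => X (t, y) i) x (Pi.single j 1)) := fun t x =>
    lt_of_lt_of_le (by positivity) (hJbound t x).1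
  have hdi : ∀ t x i, DifferentiableAt ℝ (fun y => X (t, y) i) x := by
    intro t x i
    by_contra hn
    refine (hpos t x).ne' (Matrix.det_eq_zero_of_row_eq_zero i fun j => ?_)
    simp [fderiv_zero_of_not_differentiableAt hn]
  have hd : ∀ t x, DifferentiableAt ℝ (fun y => X (t, y)) x := fun t x =>
    differentiableAt_pi.2 fun i => hdi t x i
  have hcomp : ∀ t x i v, fderiv ℝ (fun y => X (t, y) i) x v
      = fderiv ℝ (fun y => X (t, y)) x v i := by
    intro t x i v
    rw [((hasFDerivAt_pi'.1 (hd t x).hasFDerivAt) i).fderiv]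
    rfl
  have hsurj := flow_surj b X L hL hflow hflow0
  refine ⟨?_, ?_⟩
  · rintro ⟨t, y⟩
    obtain ⟨x, rfl⟩ := hsurj t y
    have hJ := hJbound t x
    have hp := hpos t x
    simp only [hρdef]
    constructor
    · rw [one_div]
      exact inv_anti₀ hp hJ.2
    · have := inv_anti₀ (by positivity) hJ.1
      simpa using this
  · rintro ⟨t, y⟩
    obtain ⟨x, rfl⟩ := hsurj t y
    have hb1 : ContDiff ℝ 1 b := hb.of_le (by exact_mod_cast le_top)
    have hbd : DifferentiableAt ℝ b (t, X (t, x)) := hb1.differentiable one_ne_zero _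
    have hρd : DifferentiableAt ℝ ρ (t, X (t, x)) :=
      (hρ.of_le (by exact_mod_cast le_top : (1 : WithTop ℕ∞) ≤ _)).differentiable one_ne_zero _
    set B := fderiv ℝ b (t, X (t, x)) with hB
    set R := fderiv ℝ ρ (t, X (t, x)) with hR
    have hsingle : ∀ u : Fin d → ℝ, ((0 : ℝ), u) = ∑ k, u k • ((0 : ℝ), (Pi.single k 1 : Fin d → ℝ)) := by
      intro u
      refine Prod.ext (by simp [Prod.fst_sum]) ?_
      rw [Prod.snd_sum]
      simpa using pi_eq_sum_univ' u
    have hdet := det_deriv (fun s i j => fderiv ℝ (fun y => X (s, y) i) x (Pi.single j 1))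
      (fun i k => B (0, Pi.single k 1) i) t (fun i j => by
        have h1 := flow_deriv b X L hb1 hL hflow hflow0 hd t x (Pi.single j 1)
        have h2 := hasDerivAt_pi.1 h1 i
        simp only [hcomp]
        rw [hsingle, map_sum] at h2
        simp only [map_smul, Finset.sum_apply, Pi.smul_apply, smul_eq_mul] at h2
        simpa only [mul_comm] using h2)
    have hinv := hdet.inv (hpos t x).ne'
    have hchain : HasDerivAt (fun s => ρ (s, X (s, x))) (R (1, b (t, X (t, x)))) t :=
      hρd.hasFDerivAt.comp_hasDerivAt t ((hasDerivAt_id t).prodMk (hflow t x))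
    have heq := hchain.unique (hinv.congr_of_eventuallyEq
      (Filter.Eventually.of_forall fun s => hρdef s x))
    have hp := hpos t x
    have hrd := hρdef t x
    have heq2 : R (1, b (t, X (t, x))) = -((∑ i, B (0, Pi.single i 1) i) * ρ (t, X (t, x))) := by
      rw [heq, hrd]
      field_simp
    have hsplit : R (1, b (t, X (t, x))) = R (1, 0)
        + ∑ i, b (t, X (t, x)) i * R (0, Pi.single i 1) := by
      have : ((1 : ℝ), b (t, X (t, x))) = (1, 0) + (0, b (t, X (t, x))) := by simp
      rw [this, map_add, hsingle, map_sum]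
      simp only [map_smul, smul_eq_mul]
    have hdiv : ∀ i, fderiv ℝ (fun q => b q i * ρ q) (t, X (t, x)) (0, Pi.single i 1)
        = b (t, X (t, x)) i * R (0, Pi.single i 1)
          + B (0, Pi.single i 1) i * ρ (t, X (t, x)) := by
      intro i
      have hbi := (hasFDerivAt_pi'.1 hbd.hasFDerivAt) i
      have hm : fderiv ℝ (fun q => b q i * ρ q) (t, X (t, x)) = _ :=
        (hbi.mul hρd.hasFDerivAt).fderiv
      rw [hm]
      simp [hB, hR, mul_comm]
    simp only [hdiv]
    rw [Finset.sum_add_distrib, ← Finset.sum_mul, ← add_assoc, ← hsplit, heq2]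
    ring
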